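/- arXiv:1505.04121 — 2 statements merged into one kernel-verified Lean document; each statement's English description precedes it below -/
import Mathlib

section
/- There exists λ ∈ ℝ such that: (i) the intermediate field generated over ℝ by {x, y + λz} is all of K; (ii) letting Φ : ℝ[S,T] → K be the ℝ-algebra homomorphism determined by Φ(S) = x and Φ(T) = y + λz, and J = ker Φ, the ideal J is prime, J is contained in the ideal (S,T) (every polynomial in J has zero constant term, so the plane curve V(J) passes through (0,0)), the quotient ring ℝ[S,T]/J has Krull dimension 1, and Φ induces an ℝ-algebra isomorphism from the fraction field of ℝ[S,T]/J onto K. -/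
open MvPolynomial

/-- Krull dimension is invariant under injective integral extensions. -/
lemma ringKrullDim_eq_of_integral_inj {R S : Type} [CommRing R] [CommRing S] [Algebra R S]
    [Algebra.IsIntegral R S] [IsDomain R] [IsDomain S]
    (hinj : Function.Injective (algebraMap R S)) :
    ringKrullDim S = ringKrullDim R := by
  apply le_antisymm
  · refine Order.krullDim_le_of_strictMono (PrimeSpectrum.comap (algebraMap R S)) ?_
    intro I J h
    exact Ideal.IsIntegral.comap_lt_comap (A := S) (R := R) h
  · refine iSup_le fun l => ?_
    have hk : RingHom.ker (algebraMap R S) ≤ (RelSeries.head l).asIdeal := by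
      rw [(RingHom.injective_iff_ker_eq_bot _).1 hinj]; exact bot_le
    obtain ⟨Q, hQ, hQc⟩ := Ideal.exists_ideal_over_prime_of_isIntegral_of_isDomain
      (S := S) (RelSeries.head l).asIdeal hk
    have : Q.LiesOver (RelSeries.head l).asIdeal := ⟨hQc.symm⟩
    obtain ⟨L, hL, -, -⟩ := Ideal.exists_ltSeries_of_hasGoingUp (S := S) l Q
    rw [← hL]
    exact le_iSup (fun p : LTSeries (PrimeSpectrum S) => ((p.length : ℕ∞) : WithBot ℕ∞)) L

/-- For affine domains, Krull dimension and transcendence degree agree. -/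
lemma exists_dim_eq_trdeg (A : Type) [CommRing A] [IsDomain A] [Algebra ℝ A]
    [Algebra.FiniteType ℝ A] :
    ∃ s : ℕ, ringKrullDim A = s ∧ Algebra.trdeg ℝ A = s := by
  obtain ⟨s, g, hg, hi⟩ := exists_integral_inj_algHom_of_fg ℝ A
  refine ⟨s, ?_⟩
  algebraize [g.toRingHom]
  have : Algebra.IsIntegral (MvPolynomial (Fin s) ℝ) A := ⟨hi⟩
  have hinj : Function.Injective (algebraMap (MvPolynomial (Fin s) ℝ) A) := hg
  have : FaithfulSMul (MvPolynomial (Fin s) ℝ) A :=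
    (faithfulSMul_iff_algebraMap_injective _ _).2 hinj
  have : IsScalarTower ℝ (MvPolynomial (Fin s) ℝ) A :=
    IsScalarTower.of_algebraMap_eq fun r => (g.commutes r).symm
  constructor
  · rw [ringKrullDim_eq_of_integral_inj hinj, MvPolynomial.ringKrullDim_of_isNoetherianRing]
    simp
  · have h := trdeg_add_eq ℝ (MvPolynomial (Fin s) ℝ) (A := A)
    have : Algebra.IsAlgebraic (MvPolynomial (Fin s) ℝ) A := inferInstance
    rw [trdeg_eq_zero (R := MvPolynomial (Fin s) ℝ) (A := A)] at h
    rw [← h]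
    simp

lemma trdeg_eq_trdeg_fractionRing (A K : Type) [CommRing A] [IsDomain A] [Algebra ℝ A]
    [Field K] [Algebra A K] [IsFractionRing A K] [Algebra ℝ K] [IsScalarTower ℝ A K] :
    Algebra.trdeg ℝ A = Algebra.trdeg ℝ K := by
  have : FaithfulSMul A K :=
    (faithfulSMul_iff_algebraMap_injective _ _).2 (IsFractionRing.injective A K)
  have h := trdeg_add_eq ℝ A (A := K)
  have : Algebra.IsAlgebraic A K := IsLocalization.isAlgebraic K (nonZeroDivisors A)
  rw [trdeg_eq_zero (R := A) (A := K), add_zero] at h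
  exact h

/-- Pigeonhole version of the primitive element theorem with parameter in a subfield. -/
lemma exists_lam {F E : Type} [Field F] [Field E] [Algebra F E] [Algebra ℝ F] [Algebra ℝ E]
    [IsScalarTower ℝ F E] [Finite (IntermediateField F E)] (y z : E) :
    ∃ lam : ℝ, y ∈ IntermediateField.adjoin F {y + algebraMap ℝ E lam * z} ∧
      z ∈ IntermediateField.adjoin F {y + algebraMap ℝ E lam * z} := by
  obtain ⟨a, b, hne, heq⟩ := Finite.exists_ne_map_eq_of_infinite
    (fun lam : ℝ => IntermediateField.adjoin F {y + algebraMap ℝ E lam * z})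
  refine ⟨a, ?_⟩
  set L := IntermediateField.adjoin F {y + algebraMap ℝ E a * z} with hL
  have ha : y + algebraMap ℝ E a * z ∈ L := IntermediateField.mem_adjoin_simple_self F _
  have hb : y + algebraMap ℝ E b * z ∈ L := by
    rw [heq]; exact IntermediateField.mem_adjoin_simple_self F _
  have hr : ∀ r : ℝ, algebraMap ℝ E r ∈ L := fun r => by
    rw [IsScalarTower.algebraMap_apply ℝ F E]; exact L.algebraMap_mem _
  have hne' : algebraMap ℝ E (a - b) ≠ 0 := by
    simpa [sub_eq_zero] using hne
  have hz : z ∈ L := by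
    have h := L.mul_mem (L.inv_mem (hr (a - b))) (L.sub_mem ha hb)
    have e : (algebraMap ℝ E (a - b))⁻¹ *
        (y + algebraMap ℝ E a * z - (y + algebraMap ℝ E b * z)) = z := by
      rw [inv_mul_eq_iff_eq_mul₀ hne', map_sub]; ring
    rwa [e] at h
  refine ⟨?_, hz⟩
  have h := L.sub_mem ha (L.mul_mem (hr a) hz)
  simpa using h

lemma mem_span_of_constantCoeff (p : MvPolynomial (Fin 2) ℝ) (h : constantCoeff p = 0) :
    p ∈ Ideal.span ({X 0, X 1} : Set (MvPolynomial (Fin 2) ℝ)) := by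
  have e : ({X 0, X 1} : Set (MvPolynomial (Fin 2) ℝ)) = Set.range X := by
    ext q; simp [Fin.exists_fin_two, eq_comm]
  rw [e]
  have := (MvPolynomial.mem_pow_idealOfVars_iff' (σ := Fin 2) (R := ℝ) 1 p).2 (by
    intro x hx
    have : x = 0 := by
      simpa [Finsupp.degree_eq_zero_iff] using hx
    subst this
    exact h)
  simpa using this

theorem space_curve_birational_to_plane_curve
    (P : Ideal (MvPolynomial (Fin 3) ℝ)) [P.IsPrime]
    (hP : P ≤ Ideal.span {X 0, X 1, X 2})
    (hdim : ringKrullDim (MvPolynomial (Fin 3) ℝ ⧸ P) = 1)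
    (K : Type) [Field K] [Algebra (MvPolynomial (Fin 3) ℝ ⧸ P) K]
    [IsFractionRing (MvPolynomial (Fin 3) ℝ ⧸ P) K]
    [Algebra ℝ K] [IsScalarTower ℝ (MvPolynomial (Fin 3) ℝ ⧸ P) K]
    (x y z : K)
    (hx : x = algebraMap (MvPolynomial (Fin 3) ℝ ⧸ P) K (Ideal.Quotient.mk P (X 0)))
    (hy : y = algebraMap (MvPolynomial (Fin 3) ℝ ⧸ P) K (Ideal.Quotient.mk P (X 1)))
    (hz : z = algebraMap (MvPolynomial (Fin 3) ℝ ⧸ P) K (Ideal.Quotient.mk P (X 2)))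
    (hxt : Transcendental ℝ x) :
    ∃ lam : ℝ,
      IntermediateField.adjoin ℝ {x, y + algebraMap ℝ K lam * z} = ⊤ ∧
      ∀ J : Ideal (MvPolynomial (Fin 2) ℝ),
        J = RingHom.ker (MvPolynomial.aeval
              (R := ℝ) ![x, y + algebraMap ℝ K lam * z]).toRingHom →
        J.IsPrime ∧
        J ≤ Ideal.span {X 0, X 1} ∧
        ringKrullDim (MvPolynomial (Fin 2) ℝ ⧸ J) = 1 ∧
        ∃ e : FractionRing (MvPolynomial (Fin 2) ℝ ⧸ J) ≃ₐ[ℝ] K,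
          ∀ p : MvPolynomial (Fin 2) ℝ,
            e (algebraMap (MvPolynomial (Fin 2) ℝ ⧸ J)
                (FractionRing (MvPolynomial (Fin 2) ℝ ⧸ J)) (Ideal.Quotient.mk J p)) =
              MvPolynomial.aeval ![x, y + algebraMap ℝ K lam * z] p := by
  -- the evaluation map on the space curve
  let Ψ : MvPolynomial (Fin 3) ℝ →ₐ[ℝ] K :=
    (IsScalarTower.toAlgHom ℝ (MvPolynomial (Fin 3) ℝ ⧸ P) K).comp (Ideal.Quotient.mkₐ ℝ P)
  have hΨ : ∀ q, Ψ q = algebraMap (MvPolynomial (Fin 3) ℝ ⧸ P) K (Ideal.Quotient.mk P q) :=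
    fun q => rfl
  have hΨ0 : ∀ q, Ψ q = 0 → q ∈ P := by
    intro q hq
    rw [hΨ, map_eq_zero_iff _ (IsFractionRing.injective (MvPolynomial (Fin 3) ℝ ⧸ P) K)] at hq
    exact Ideal.Quotient.eq_zero_iff_mem.1 hq
  -- transcendence degree of K
  have htr : Algebra.trdeg ℝ K = 1 := by
    obtain ⟨s, h1, h2⟩ := exists_dim_eq_trdeg (MvPolynomial (Fin 3) ℝ ⧸ P)
    rw [hdim] at h1
    have hs : s = 1 := by exact_mod_cast h1.symm
    rw [← trdeg_eq_trdeg_fractionRing (MvPolynomial (Fin 3) ℝ ⧸ P) K, h2, hs]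
    simp
  -- any subfield containing x, y, z is everything
  have hgen : ∀ L : IntermediateField ℝ K, x ∈ L → y ∈ L → z ∈ L → L = ⊤ := by
    intro L h0 h1 h2
    have hq : ∀ q, Ψ q ∈ L := by
      intro q
      induction q using MvPolynomial.induction_on with
      | C a => 
        have : Ψ (C a) = algebraMap ℝ K a := Ψ.commutes a
        rw [this]; exact L.algebraMap_mem a
      | add p q hp hq => rw [map_add]; exact L.add_mem hp hq
      | mul_X p i hp =>
        rw [map_mul]
        refine L.mul_mem hp ?_
        fin_cases i
        · exact hx ▸ h0
        · exact hy ▸ h1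
        · exact hz ▸ h2
    rw [eq_top_iff]
    intro k _
    obtain ⟨a, b, -, rfl⟩ := IsFractionRing.div_surjective (MvPolynomial (Fin 3) ℝ ⧸ P) k
    obtain ⟨a, rfl⟩ := Ideal.Quotient.mk_surjective a
    obtain ⟨b, rfl⟩ := Ideal.Quotient.mk_surjective b
    exact L.div_mem (hq a) (hq b)
  -- K is finite over ℝ(x)
  let F : IntermediateField ℝ K := IntermediateField.adjoin ℝ {x}
  have halg : Algebra.IsAlgebraic F K := by
    have hi : AlgebraicIndependent ℝ (fun _ : Unit => x) :=
      algebraicIndependent_unique_type_iff.2 hxt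
    have hb := hi.isTranscendenceBasis_of_trdeg_le_of_finite (by simp [htr])
    have := hb.isAlgebraic_field
    rwa [Set.range_const] at this
  have hxF : x ∈ F := IntermediateField.mem_adjoin_simple_self ℝ x
  have hrest : ∀ L : IntermediateField F K, y ∈ L → z ∈ L → L = ⊤ := by
    intro L h1 h2
    have := hgen (L.restrictScalars ℝ) (L.algebraMap_mem ⟨x, hxF⟩) h1 h2
    rwa [IntermediateField.restrictScalars_eq_top_iff] at this
  have hfd : FiniteDimensional F K := by
    have h := hrest (IntermediateField.adjoin F {y, z})
      (IntermediateField.subset_adjoin _ _ (by simp))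
      (IntermediateField.subset_adjoin _ _ (by simp))
    have h2 : FiniteDimensional F (IntermediateField.adjoin F ({y, z} : Set K)) :=
      IntermediateField.finiteDimensional_adjoin fun k _ => Algebra.IsIntegral.isIntegral k
    rw [h] at h2
    exact IntermediateField.topEquiv.toLinearEquiv.finiteDimensional
  have hfin : Finite (IntermediateField F K) :=
    Field.finite_intermediateField_of_exists_primitive_element F K
      (Field.exists_primitive_element F K)
  obtain ⟨lam, hly, hlz⟩ := exists_lam (F := F) y z
  have htop : IntermediateField.adjoin ℝ {x, y + algebraMap ℝ K lam * z} = ⊤ := by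
    have h := hrest _ hly hlz
    rw [← IntermediateField.adjoin_simple_adjoin_simple,
      IntermediateField.restrictScalars_eq_top_iff]
    exact h
  refine ⟨lam, htop, ?_⟩
  set w := y + algebraMap ℝ K lam * z with hw
  intro J hJ
  have hmem : ∀ p, p ∈ J ↔ aeval (R := ℝ) ![x, w] p = 0 := fun p => by
    rw [hJ]; exact RingHom.mem_ker
  have hprime : J.IsPrime := by rw [hJ]; exact RingHom.ker_isPrime _
  let g : (MvPolynomial (Fin 2) ℝ ⧸ J) →ₐ[ℝ] K :=
    Ideal.Quotient.liftₐ J (aeval (R := ℝ) ![x, w]) fun p hp => (hmem p).1 hp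
  have hgmk : ∀ p, g (Ideal.Quotient.mk J p) = aeval (R := ℝ) ![x, w] p := fun p => rfl
  have hg : Function.Injective g := by
    rw [injective_iff_map_eq_zero]
    intro a ha
    obtain ⟨p, rfl⟩ := Ideal.Quotient.mk_surjective a
    exact Ideal.Quotient.eq_zero_iff_mem.2 ((hmem p).2 ha)
  let f : FractionRing (MvPolynomial (Fin 2) ℝ ⧸ J) →ₐ[ℝ] K := IsFractionRing.liftAlgHom hg
  have hf : ∀ a, f (algebraMap _ _ a) = g a := fun a => IsFractionRing.lift_algebraMap hg a
  have hfs : Function.Surjective f := by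
    rw [← AlgHom.fieldRange_eq_top, eq_top_iff, ← htop, IntermediateField.adjoin_le_iff]
    rintro k (rfl | rfl)
    · exact ⟨algebraMap _ _ (Ideal.Quotient.mk J (X 0)), by
        change f _ = _
        rw [hf, hgmk]; simp⟩
    · exact ⟨algebraMap _ _ (Ideal.Quotient.mk J (X 1)), by
        change f _ = _
        rw [hf, hgmk]; simp⟩
  let e : FractionRing (MvPolynomial (Fin 2) ℝ ⧸ J) ≃ₐ[ℝ] K :=
    AlgEquiv.ofBijective f ⟨f.toRingHom.injective, hfs⟩
  refine ⟨hprime, ?_, ?_, e, ?_⟩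
  · intro p hp
    apply mem_span_of_constantCoeff
    let σ : MvPolynomial (Fin 2) ℝ →ₐ[ℝ] MvPolynomial (Fin 3) ℝ :=
      aeval ![X 0, X 1 + C lam * X 2]
    have hc : Ψ.comp σ = aeval (R := ℝ) ![x, w] := by
      have hC : Ψ (C lam) = algebraMap ℝ K lam := Ψ.commutes lam
      ext i
      fin_cases i
      · simp [σ, hΨ, hx]
      · have : Ψ (X 1 + C lam * X 2) = w := by
          rw [map_add, map_mul, hC, hw, hy, hz]; rfl
        simpa [σ] using this
    have h0 : σ p ∈ P := hΨ0 _ (by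
      have := (hmem p).1 hp
      rw [← hc] at this
      exact this)
    have h1 : constantCoeff (σ p) = 0 := by
      have hle : Ideal.span {X 0, X 1, X 2} ≤
          RingHom.ker (constantCoeff : MvPolynomial (Fin 3) ℝ →+* ℝ) := by
        rw [Ideal.span_le]
        rintro q (rfl | rfl | rfl) <;> simp [RingHom.mem_ker]
      exact hle (hP h0)
    have h2 : (constantCoeff : MvPolynomial (Fin 3) ℝ →+* ℝ).comp σ.toRingHom
        = constantCoeff := by
      apply MvPolynomial.ringHom_ext
      · intro r; simp [σ]
      · intro i; fin_cases i <;> simp [σ]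
    rw [← h2]
    exact h1
  · obtain ⟨s, h1, h2⟩ := exists_dim_eq_trdeg (MvPolynomial (Fin 2) ℝ ⧸ J)
    rw [trdeg_eq_trdeg_fractionRing (MvPolynomial (Fin 2) ℝ ⧸ J)
      (FractionRing (MvPolynomial (Fin 2) ℝ ⧸ J)), e.trdeg_eq, htr] at h2
    have hs : s = 1 := by exact_mod_cast h2.symm
    rw [h1, hs]; simp
  · intro p
    exact (hf _).trans (hgmk p)
end

section
/- Let h ∈ ℝ[x,y,z] be irreducible with h(O) = 0 and ∇h(O) ≠ (0,0,0), where O = (0,0,0) (so the origin lies in the nonsingular locus of the surface V(h)). Then there exist real constants A, B, C > 0 such that the ideal of ℂ[x,y,z] generated by h^ℂ and D_{A,B,C}(h)^ℂ has height at least 2; equivalently, the quotient ring ℂ[x,y,z]/(h^ℂ, D_{A,B,C}(h)^ℂ) has Krull dimension at most 1. -/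
open MvPolynomial

/-- The polynomial `D_{A,B,C}(h)`: determinant of the matrix with rows `(Ax, By, Cz)`,
`(x, y, z)` and `(∂h/∂x, ∂h/∂y, ∂h/∂z)`. -/
noncomputable def Dpoly (A B C : ℝ) (h : MvPolynomial (Fin 3) ℝ) : MvPolynomial (Fin 3) ℝ :=
  Matrix.det (Matrix.of
    ![![MvPolynomial.C A * X 0, MvPolynomial.C B * X 1, MvPolynomial.C C * X 2],
      ![X 0, X 1, X 2],
      ![pderiv 0 h, pderiv 1 h, pderiv 2 h]])

lemma ringKrullDim_le_of_integral_aux (R S : Type*) [CommRing R] [CommRing S] [Algebra R S]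
    [Algebra.IsIntegral R S] : ringKrullDim S ≤ ringKrullDim R := by
  refine Order.krullDim_le_of_strictMono (PrimeSpectrum.comap (algebraMap R S)) ?_
  intro P Q hPQ
  exact Ideal.IsIntegral.comap_lt_comap (R := R) (I := P.asIdeal) (J := Q.asIdeal) hPQ

attribute [local instance] MvPolynomial.algebraMvPolynomial in
lemma dim_le_one_aux (h d : MvPolynomial (Fin 3) ℝ) (hp : Prime h) (hd : ¬ h ∣ d) :
    ringKrullDim (MvPolynomial (Fin 3) ℂ ⧸
        Ideal.span {MvPolynomial.map (algebraMap ℝ ℂ) h,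
          MvPolynomial.map (algebraMap ℝ ℂ) d}) ≤ 1 := by
  set I := Ideal.span {MvPolynomial.map (algebraMap ℝ ℂ) h,
          MvPolynomial.map (algebraMap ℝ ℂ) d} with hI
  have : (Ideal.span {h}).IsPrime := (Ideal.span_singleton_prime hp.ne_zero).2 hp
  set J := I.comap (algebraMap (MvPolynomial (Fin 3) ℝ) (MvPolynomial (Fin 3) ℂ)) with hJ
  have h1 : ringKrullDim (MvPolynomial (Fin 3) ℂ ⧸ I) ≤
      ringKrullDim (MvPolynomial (Fin 3) ℝ ⧸ J) :=
    ringKrullDim_le_of_integral_aux _ _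
  have hhJ : h ∈ J := Ideal.subset_span (by left; rfl)
  have hdJ : d ∈ J := Ideal.subset_span (by right; rfl)
  have hle : Ideal.span {h} ≤ J := by
    rw [Ideal.span_singleton_le_iff_mem]; exact hhJ
  have h2 : ringKrullDim (MvPolynomial (Fin 3) ℝ ⧸ J) + 1 ≤
      ringKrullDim (MvPolynomial (Fin 3) ℝ ⧸ Ideal.span {h}) := by
    refine ringKrullDim_succ_le_of_surjective (Ideal.Quotient.factor hle)
      (Ideal.Quotient.factor_surjective hle) (r := Ideal.Quotient.mk _ d) ?_ ?_
    · rw [mem_nonZeroDivisors_iff_ne_zero, Ne, Ideal.Quotient.eq_zero_iff_mem,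
        Ideal.mem_span_singleton]
      exact hd
    · rw [Ideal.Quotient.factor_mk, Ideal.Quotient.eq_zero_iff_mem]
      exact hdJ
  have h3 := ringKrullDim_quotient_succ_le_of_nonZeroDivisor
    (mem_nonZeroDivisors_iff_ne_zero.2 hp.ne_zero)
  rw [MvPolynomial.ringKrullDim_of_isNoetherianRing, ringKrullDim_eq_zero_of_field] at h3
  refine h1.trans ?_
  generalize ringKrullDim (MvPolynomial (Fin 3) ℝ ⧸ J) = a at h2
  generalize ringKrullDim (MvPolynomial (Fin 3) ℝ ⧸ Ideal.span {h}) = b at h2 h3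
  have h4 : a + 1 + 1 ≤ 1 + 1 + 1 := by
    refine (add_le_add_left h2 1).trans (h3.trans ?_)
    simp
    norm_num
  rw [ENat.WithBot.add_le_add_one_right_iff, ENat.WithBot.add_le_add_one_right_iff] at h4
  exact h4

lemma grad_zero_aux (h : MvPolynomial (Fin 3) ℝ) (h0 : eval (0 : Fin 3 → ℝ) h = 0)
    (i j : Fin 3) (hij : i ≠ j) (hd : h ∣ X j * pderiv i h - X i * pderiv j h) :
    eval (0 : Fin 3 → ℝ) (pderiv i h) = 0 ∧ eval (0 : Fin 3 → ℝ) (pderiv j h) = 0 := by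
  obtain ⟨q, hq⟩ := hd
  have h1 := congrArg (fun p => eval (0 : Fin 3 → ℝ) (pderiv i p)) hq
  have h2 := congrArg (fun p => eval (0 : Fin 3 → ℝ) (pderiv j p)) hq
  simp [-eval_zero, pderiv_X, hij, hij.symm, h0] at h1 h2
  generalize eval (0 : Fin 3 → ℝ) (pderiv i h) = a at *
  generalize eval (0 : Fin 3 → ℝ) (pderiv j h) = b at *
  generalize eval (0 : Fin 3 → ℝ) q = c at *
  constructor <;> nlinarith [sq_nonneg a, sq_nonneg b, sq_nonneg (a*c), sq_nonneg (b*c)]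

lemma not_dvd_aux (h : MvPolynomial (Fin 3) ℝ) (hp : Irreducible h)
    (i j k : Fin 3) (hij : i ≠ j) (hik : i ≠ k) (hx : h ∣ X i) :
    ¬ h ∣ X k * (X j * pderiv i h - X i * pderiv j h) := by
  intro hd
  obtain ⟨u, hu⟩ := hx
  have hX : Irreducible (X i : MvPolynomial (Fin 3) ℝ) := (MvPolynomial.X_prime (i := i)).irreducible
  have huu : IsUnit u := (hX.isUnit_or_isUnit hu).resolve_left hp.not_isUnit
  obtain ⟨v, hv⟩ := huu.exists_right_inv
  have hh : h = X i * v := by rw [hu, mul_assoc, hv, mul_one]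
  obtain ⟨q, hq⟩ := hd
  have hv0 : eval (fun l => if l = i then (0 : ℝ) else 1) v ≠ 0 := by
    intro h0
    have := congrArg (eval (fun l => if l = i then (0 : ℝ) else 1)) hv
    simp [h0] at this
  apply hv0
  have := congrArg (eval (fun l => if l = i then (0 : ℝ) else 1)) hq
  rw [hh] at this
  simpa [pderiv_X, Pi.single_apply, hij, hij.symm, hik, hik.symm] using this

lemma Dpoly_eq_aux (A B K : ℝ) (h : MvPolynomial (Fin 3) ℝ) :
    Dpoly A B K h = C (B - K) * (X 1 * X 2 * pderiv 0 h) + C (K - A) * (X 0 * X 2 * pderiv 1 h)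
      + C (A - B) * (X 0 * X 1 * pderiv 2 h) := by
  simp [Dpoly, Matrix.det_fin_three]
  ring

lemma exists_not_dvd_aux (h : MvPolynomial (Fin 3) ℝ)
    (hirr : Irreducible h) (h0 : eval (0 : Fin 3 → ℝ) h = 0)
    (hgrad : (fun i => eval (0 : Fin 3 → ℝ) (pderiv i h)) ≠ (0 : Fin 3 → ℝ)) :
    ∃ A B C : ℝ, 0 < A ∧ 0 < B ∧ 0 < C ∧ ¬ h ∣ Dpoly A B C h := by
  by_contra! hcon
  have e1 : h ∣ X 2 * (X 1 * pderiv 0 h - X 0 * pderiv 1 h) := by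
    have := hcon 2 2 1 (by norm_num) (by norm_num) (by norm_num)
    rw [Dpoly_eq_aux] at this
    norm_num at this
    convert this using 1; ring
  have e2 : h ∣ X 0 * (X 2 * pderiv 1 h - X 1 * pderiv 2 h) := by
    have := hcon 1 2 2 (by norm_num) (by norm_num) (by norm_num)
    rw [Dpoly_eq_aux] at this
    norm_num at this
    convert this using 1; ring
  have e3 : h ∣ X 1 * (X 0 * pderiv 2 h - X 2 * pderiv 0 h) := by
    have := hcon 2 1 2 (by norm_num) (by norm_num) (by norm_num)
    rw [Dpoly_eq_aux] at this
    norm_num at this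
    convert this using 1; ring
  have n0 : ¬ h ∣ X 0 := fun hx => not_dvd_aux h hirr 0 1 2 (by decide) (by decide) hx e1
  have n2 : ¬ h ∣ X 2 := fun hx => not_dvd_aux h hirr 2 0 1 (by decide) (by decide) hx e3
  have f1 := (hirr.prime.dvd_or_dvd e1).resolve_left n2
  have f2 := (hirr.prime.dvd_or_dvd e2).resolve_left n0
  have g1 := grad_zero_aux h h0 0 1 (by decide) f1
  have g2 := grad_zero_aux h h0 1 2 (by decide) f2
  apply hgrad
  funext i
  fin_cases i
  · exact g1.1
  · exact g1.2
  · exact g2.2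

/-- For an irreducible surface `V(h)` that is nonsingular at the origin, suitable positive
constants `A, B, C` can be chosen so that the ideal `(h, D_{A,B,C}(h))` of `ℂ[x,y,z]` has
height at least 2, i.e. the quotient has Krull dimension at most 1. -/
theorem exists_ellipsoid_constants_dim_le_one (h : MvPolynomial (Fin 3) ℝ)
    (hirr : Irreducible h) (h0 : eval (0 : Fin 3 → ℝ) h = 0)
    (hgrad : (fun i => eval (0 : Fin 3 → ℝ) (pderiv i h)) ≠ (0 : Fin 3 → ℝ)) :
    ∃ A B C : ℝ, 0 < A ∧ 0 < B ∧ 0 < C ∧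
      ringKrullDim (MvPolynomial (Fin 3) ℂ ⧸
        Ideal.span {MvPolynomial.map (algebraMap ℝ ℂ) h,
          MvPolynomial.map (algebraMap ℝ ℂ) (Dpoly A B C h)}) ≤ 1 := by
  obtain ⟨A, B, C, hA, hB, hC, hd⟩ := exists_not_dvd_aux h hirr h0 hgrad
  exact ⟨A, B, C, hA, hB, hC, dim_le_one_aux h _ hirr.prime hd⟩
end
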